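/- In the concrete quasi-free CAR model with past P = {n ∈ ℤ : n < 0} and future F = {n ∈ ℤ : n ≥ 0}: assume there is ε ∈ (0,1/2) with ε ≤ λ_l ≤ 1−ε and λ_l ≠ 1/2 for all l ∈ ℤ, and let ξ ∈ H satisfy the l-th intertwining equations for every l ∈ F. Then for every pair (A,B) of finite subsets of ℤ with ⟨e_{(A,B)}, ξ⟩ ≠ 0, the set {l ∈ F : l ∉ A ∪ B and ⟨e_{(A∪{l}, B∪{l})}, ξ⟩ ≠ 0} is finite. (A basis pair can be l-paired for at most finitely many future indices l.) -/

import Mathlib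

/- The concrete quasi-free CAR model: `H = ℓ²(Finset ℤ × Finset ℤ)` with orthonormal basis
`e (A, B)`, vacuum `Ω = e (∅, ∅)`, and operators `a l`, `b l`, `G` given on the basis by the
quasi-free formulas with symbol `λ` (diagonal, `R h_l = λ_l h_l`). -/

noncomputable section

/-- The GNS Hilbert space: `ℓ²` over pairs of finite subsets of `ℤ`. -/
abbrev CARSpace := lp (fun _ : Finset ℤ × Finset ℤ => ℂ) 2

/-- The orthonormal basis vector `e_{(A,B)}`. -/
def carE (p : Finset ℤ × Finset ℤ) : CARSpace := lp.single 2 p 1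

/-- The vacuum vector `Ω = e_{(∅,∅)}`. -/
def carΩ : CARSpace := carE (∅, ∅)

/-- `n(l, X)` = number of elements of `X` strictly below `l`. -/
def nlt (l : ℤ) (X : Finset ℤ) : ℕ := (X.filter fun j => j < l).card

/-- `a` is the family of quasi-free annihilation-type operators `a_l = π_R(a(h_l))`:
`a_l e_{(A,B)} = √(1−λ_l)·(−1)^{|B|}·(−1)^{n(l,A)}·[l ∉ A]·e_{(A∪{l},B)}
              + √(λ_l)·(−1)^{n(l,B)}·[l ∈ B]·e_{(A,B∖{l})}`. -/
def IsCAR_a (lam : ℤ → ℝ) (a : ℤ → CARSpace →L[ℂ] CARSpace) : Prop :=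
  ∀ (l : ℤ) (A B : Finset ℤ),
    a l (carE (A, B)) =
      ((Real.sqrt (1 - lam l) : ℂ) * (-1) ^ B.card * (-1) ^ nlt l A *
          (if l ∈ A then 0 else 1)) • carE (insert l A, B) +
      ((Real.sqrt (lam l) : ℂ) * (-1) ^ nlt l B *
          (if l ∈ B then 1 else 0)) • carE (A, B.erase l)

/-- `b` is the family of commutant quasi-free operators:
`b_l e_{(A,B)} = √(λ_l)·(−1)^{|B|}·(−1)^{n(l,A)}·[l ∉ A]·e_{(A∪{l},B)}
              − √(1−λ_l)·(−1)^{n(l,B)}·[l ∈ B]·e_{(A,B∖{l})}`. -/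
def IsCAR_b (lam : ℤ → ℝ) (b : ℤ → CARSpace →L[ℂ] CARSpace) : Prop :=
  ∀ (l : ℤ) (A B : Finset ℤ),
    b l (carE (A, B)) =
      ((Real.sqrt (lam l) : ℂ) * (-1) ^ B.card * (-1) ^ nlt l A *
          (if l ∈ A then 0 else 1)) • carE (insert l A, B) -
      ((Real.sqrt (1 - lam l) : ℂ) * (-1) ^ nlt l B *
          (if l ∈ B then 1 else 0)) • carE (A, B.erase l)

/-- `G = Γ⊗Γ` : `G e_{(A,B)} = (−1)^{|A|+|B|} e_{(A,B)}`. -/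
def IsCAR_G (G : CARSpace →L[ℂ] CARSpace) : Prop :=
  ∀ (A B : Finset ℤ), G (carE (A, B)) = ((-1 : ℂ) ^ (A.card + B.card)) • carE (A, B)

/-- `ξ` satisfies the `l`-th intertwining equations:
`(1−λ_l)^{−1/2}·(a_l ξ) = −λ_l^{−1/2}·G(b_l ξ)` and
`λ_l^{−1/2}·(a_l* ξ) = −(1−λ_l)^{−1/2}·b_l*(G ξ)`. -/
def IntertwinesAt (lam : ℤ → ℝ) (a b : ℤ → CARSpace →L[ℂ] CARSpace)
    (G : CARSpace →L[ℂ] CARSpace) (l : ℤ) (ξ : CARSpace) : Prop :=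
  (Real.sqrt (1 - lam l) : ℂ)⁻¹ • a l ξ = -((Real.sqrt (lam l) : ℂ)⁻¹) • G (b l ξ) ∧
  (Real.sqrt (lam l) : ℂ)⁻¹ • (star (a l)) ξ =
    -((Real.sqrt (1 - lam l) : ℂ)⁻¹) • (star (b l)) (G ξ)

local notation "⟪" x ", " y "⟫" => @inner ℂ _ _ x y

/- In the coordinate `(A ∪ {l}, B)` the first intertwining equation relates only the coefficients
`x = ξ (A, B)` and `y = ξ (A ∪ {l}, B ∪ {l})`. If `|A| + |B|` is even, the contributions of `x`
cancel and `y = 0`. If it is odd, `2 √λ_l √(1 - λ_l) |x| = |1 - 2 λ_l| |y|`, which bounds `|y|`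
below uniformly in `l`; as `ξ` is square-summable, this can happen for finitely many `l` only. -/

theorem finite_setOf_le_norm_of_memℓp {ι : Type*} {E : ι → Type*} [∀ i, NormedAddCommGroup (E i)]
    {p : ENNReal} {f : ∀ i, E i} (hf : Memℓp f p) (hp : p ≠ ⊤) {δ : ℝ} (hδ : 0 < δ) :
    {i | δ ≤ ‖f i‖}.Finite := by
  have hq : 0 < (max p 1).toReal :=
    ENNReal.toReal_pos (by positivity) (max_ne_top hp ENNReal.one_ne_top)
  have hsum : Summable fun i => ‖f i‖ ^ (max p 1).toReal :=
    (hf.of_exponent_ge (le_max_left p 1)).summable hq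
  have hsmall : ∀ᶠ i in Filter.cofinite, ‖f i‖ ^ (max p 1).toReal < δ ^ (max p 1).toReal :=
    hsum.tendsto_cofinite_zero.eventually_lt_const (Real.rpow_pos_of_pos hδ _)
  exact (Filter.eventually_cofinite.mp hsmall).subset fun i hi =>
    not_lt.mpr (Real.rpow_le_rpow hδ.le hi hq.le)

theorem le_sqrt_mul_sqrt_one_sub {ε r : ℝ} (hε : 0 ≤ ε) (hr : ε ≤ r) (hr' : r ≤ 1 - ε) :
    ε ≤ √r * √(1 - r) :=
  calc ε = √ε * √ε := (Real.mul_self_sqrt hε).symm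
    _ ≤ √r * √(1 - r) := by gcongr; linarith

theorem carE_apply (p q : Finset ℤ × Finset ℤ) : carE p q = if q = p then 1 else 0 := by
  simp [carE, lp.single_apply, Pi.single_apply]

theorem inner_carE_left (p : Finset ℤ × Finset ℤ) (ξ : CARSpace) : ⟪carE p, ξ⟫ = ξ p := by
  simp [carE, lp.inner_single_left]

theorem clm_ext_carE {E : Type*} [AddCommMonoid E] [Module ℂ E] [TopologicalSpace E]
    [T2Space E] {S T : CARSpace →L[ℂ] E} (h : ∀ p, S (carE p) = T (carE p)) : S = T :=
  lp.ext_continuousLinearMap ENNReal.ofNat_ne_top fun p => ContinuousLinearMap.ext_ring (h p)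

theorem clm_coord_eq_of_carE_coord_eq {T : CARSpace →L[ℂ] CARSpace} {φ : CARSpace →L[ℂ] ℂ}
    {q : Finset ℤ × Finset ℤ} (h : ∀ p, T (carE p) q = φ (carE p)) (ξ : CARSpace) :
    T ξ q = φ ξ := by
  have hrow : (innerSL ℂ (carE q)).comp T = φ :=
    clm_ext_carE fun p => (inner_carE_left q (T (carE p))).trans (h p)
  rw [← hrow, ContinuousLinearMap.comp_apply, innerSL_apply_apply, inner_carE_left]

theorem nlt_insert_self (l : ℤ) (X : Finset ℤ) : nlt l (insert l X) = nlt l X := by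
  simp [nlt, Finset.filter_insert]

theorem IsCAR_G.apply_coord {G : CARSpace →L[ℂ] CARSpace} (hG : IsCAR_G G) (ξ : CARSpace)
    (A B : Finset ℤ) : G ξ (A, B) = (-1) ^ (A.card + B.card) * ξ (A, B) := by
  have hrow (p : Finset ℤ × Finset ℤ) : G (carE p) (A, B) =
      ((-1 : ℂ) ^ (A.card + B.card) • innerSL ℂ (carE (A, B))) (carE p) := by
    obtain ⟨A', B'⟩ := p
    simp only [hG A' B', lp.coeFn_smul, Pi.smul_apply, smul_apply, innerSL_apply_apply,
      inner_carE_left, carE_apply, smul_eq_mul, mul_ite, mul_one, mul_zero]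
    split_ifs with h
    · rw [(Prod.mk.inj h).1, (Prod.mk.inj h).2]
    · rfl
  simpa [inner_carE_left] using clm_coord_eq_of_carE_coord_eq hrow ξ

/-- `T` is `u` times creation of the mode `l` in the first index plus `v` times its annihilation in
the second, with the fermionic signs of the model. Both `a_l` and `b_l` have this form, which lets
their coordinates be computed together. -/
def IsQuasiFreeField (u v : ℂ) (l : ℤ) (T : CARSpace →L[ℂ] CARSpace) : Prop :=
  ∀ A B : Finset ℤ,
    T (carE (A, B)) =
      (u * (-1) ^ B.card * (-1) ^ nlt l A * (if l ∈ A then 0 else 1)) • carE (insert l A, B) +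
      (v * (-1) ^ nlt l B * (if l ∈ B then 1 else 0)) • carE (A, B.erase l)

theorem IsCAR_a.isQuasiFreeField {lam : ℤ → ℝ} {a : ℤ → CARSpace →L[ℂ] CARSpace}
    (ha : IsCAR_a lam a) (l : ℤ) : IsQuasiFreeField √(1 - lam l) √(lam l) l (a l) :=
  ha l

theorem IsCAR_b.isQuasiFreeField {lam : ℤ → ℝ} {b : ℤ → CARSpace →L[ℂ] CARSpace}
    (hb : IsCAR_b lam b) (l : ℤ) : IsQuasiFreeField √(lam l) (-√(1 - lam l)) l (b l) := by
  intro A B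
  rw [hb l A B, sub_eq_add_neg, ← neg_smul, neg_mul, neg_mul]

theorem IsQuasiFreeField.apply_coord_insert {u v : ℂ} {l : ℤ} {T : CARSpace →L[ℂ] CARSpace}
    (hT : IsQuasiFreeField u v l T) (ξ : CARSpace) {A B : Finset ℤ} (hA : l ∉ A) (hB : l ∉ B) :
    T ξ (insert l A, B) =
      u * (-1) ^ B.card * (-1) ^ nlt l A * ξ (A, B) +
        v * (-1) ^ nlt l B * ξ (insert l A, insert l B) := by
  have hrow (p : Finset ℤ × Finset ℤ) : T (carE p) (insert l A, B) =
      ((u * (-1) ^ B.card * (-1) ^ nlt l A) • innerSL ℂ (carE (A, B)) +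
        (v * (-1) ^ nlt l B) • innerSL ℂ (carE (insert l A, insert l B))) (carE p) := by
    obtain ⟨A', B'⟩ := p
    have hcreate (hA' : l ∉ A') : insert l A = insert l A' ↔ A = A' := by
      rw [← Finset.erase_eq_iff_eq_insert (Finset.mem_insert_self l A) hA', Finset.erase_insert hA]
    have hannih (hB' : l ∈ B') : B = B'.erase l ↔ insert l B = B' := by
      rw [eq_comm, Finset.erase_eq_iff_eq_insert hB' hB, eq_comm]
    simp only [hT A' B', lp.coeFn_add, lp.coeFn_smul, Pi.add_apply, Pi.smul_apply, add_apply,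
      smul_apply, innerSL_apply_apply, inner_carE_left, carE_apply, Prod.mk.injEq, smul_eq_mul]
    congr 1
    · by_cases hA' : l ∈ A'
      · have hne : A ≠ A' := fun h => hA (h ▸ hA')
        simp [hA', hne]
      · simp only [hA', hcreate hA']
        grind
    · by_cases hB' : l ∈ B'
      · simp only [hB', hannih hB']
        grind [nlt_insert_self]
      · have hne : insert l B ≠ B' := fun h => hB' (h ▸ Finset.mem_insert_self l B)
        simp [hB', hne]
  simpa [inner_carE_left] using clm_coord_eq_of_carE_coord_eq hrow ξ

section Intertwining

variable {lam : ℤ → ℝ} {a b : ℤ → CARSpace →L[ℂ] CARSpace} {G : CARSpace →L[ℂ] CARSpace}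
  {ξ : CARSpace} {l : ℤ} {A B : Finset ℤ}

theorem coord_relation_of_intertwines (ha : IsCAR_a lam a) (hb : IsCAR_b lam b) (hG : IsCAR_G G)
    (hpos : 0 < lam l) (hlt : lam l < 1)
    (hξ : (√(1 - lam l) : ℂ)⁻¹ • a l ξ = -(√(lam l) : ℂ)⁻¹ • G (b l ξ))
    (hA : l ∉ A) (hB : l ∉ B) :
    (√(lam l) * √(1 - lam l) : ℂ) * (1 - (-1) ^ (A.card + B.card)) *
        ((-1) ^ B.card * (-1) ^ nlt l A) * ξ (A, B) +
      (lam l + (1 - lam l) * (-1) ^ (A.card + B.card)) * (-1) ^ nlt l B *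
        ξ (insert l A, insert l B) = 0 := by
  have hs : (√(lam l) : ℂ) ≠ 0 := by exact_mod_cast (Real.sqrt_pos.mpr hpos).ne'
  have hc : (√(1 - lam l) : ℂ) ≠ 0 := by
    exact_mod_cast (Real.sqrt_pos.mpr (sub_pos.mpr hlt)).ne'
  have hs_sq : (√(lam l) : ℂ) ^ 2 = lam l := by exact_mod_cast Real.sq_sqrt hpos.le
  have hc_sq : (√(1 - lam l) : ℂ) ^ 2 = 1 - lam l := by
    exact_mod_cast Real.sq_sqrt (sub_pos.mpr hlt).le
  have hcoord := congrArg (fun η : CARSpace => η (insert l A, B)) hξ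
  simp only [lp.coeFn_smul, Pi.smul_apply, smul_eq_mul, hG.apply_coord,
    (ha.isQuasiFreeField l).apply_coord_insert ξ hA hB,
    (hb.isQuasiFreeField l).apply_coord_insert ξ hA hB, Finset.card_insert_of_notMem hA] at hcoord
  rw [← hc_sq, ← hs_sq]
  field_simp at hcoord
  linear_combination hcoord

theorem coord_insert_insert_eq_zero_of_even (ha : IsCAR_a lam a) (hb : IsCAR_b lam b)
    (hG : IsCAR_G G) (hpos : 0 < lam l) (hlt : lam l < 1)
    (hξ : (√(1 - lam l) : ℂ)⁻¹ • a l ξ = -(√(lam l) : ℂ)⁻¹ • G (b l ξ))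
    (hA : l ∉ A) (hB : l ∉ B) (heven : Even (A.card + B.card)) :
    ξ (insert l A, insert l B) = 0 := by
  simpa [heven.neg_one_pow] using coord_relation_of_intertwines ha hb hG hpos hlt hξ hA hB

theorem norm_coord_eq_of_odd (ha : IsCAR_a lam a) (hb : IsCAR_b lam b)
    (hG : IsCAR_G G) (hpos : 0 < lam l) (hlt : lam l < 1)
    (hξ : (√(1 - lam l) : ℂ)⁻¹ • a l ξ = -(√(lam l) : ℂ)⁻¹ • G (b l ξ))
    (hA : l ∉ A) (hB : l ∉ B) (hodd : Odd (A.card + B.card)) :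
    2 * (√(lam l) * √(1 - lam l)) * ‖ξ (A, B)‖ =
      |1 - 2 * lam l| * ‖ξ (insert l A, insert l B)‖ := by
  have hrel := coord_relation_of_intertwines ha hb hG hpos hlt hξ hA hB
  rw [hodd.neg_one_pow] at hrel
  have hnorm : ‖((2 * (√(lam l) * √(1 - lam l)) : ℝ) : ℂ) * ((-1) ^ B.card * (-1) ^ nlt l A) *
      ξ (A, B)‖ = ‖((1 - 2 * lam l : ℝ) : ℂ) * (-1) ^ nlt l B * ξ (insert l A, insert l B)‖ := by
    congr 1
    push_cast
    linear_combination hrel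
  simpa only [norm_mul, norm_pow, norm_neg, norm_one, one_pow, mul_one, Complex.norm_real,
    Real.norm_eq_abs, abs_two, abs_of_nonneg (Real.sqrt_nonneg _)] using hnorm

theorem two_mul_norm_coord_le_of_odd {ε : ℝ} (ha : IsCAR_a lam a) (hb : IsCAR_b lam b)
    (hG : IsCAR_G G) (hε : 0 < ε) (hlam : ε ≤ lam l ∧ lam l ≤ 1 - ε)
    (hξ : (√(1 - lam l) : ℂ)⁻¹ • a l ξ = -(√(lam l) : ℂ)⁻¹ • G (b l ξ))
    (hA : l ∉ A) (hB : l ∉ B) (hodd : Odd (A.card + B.card)) :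
    2 * ε * ‖ξ (A, B)‖ ≤ ‖ξ (insert l A, insert l B)‖ := by
  obtain ⟨hlo, hhi⟩ := hlam
  calc 2 * ε * ‖ξ (A, B)‖
      ≤ 2 * (√(lam l) * √(1 - lam l)) * ‖ξ (A, B)‖ := by
        gcongr
        exact le_sqrt_mul_sqrt_one_sub hε.le hlo hhi
    _ = |1 - 2 * lam l| * ‖ξ (insert l A, insert l B)‖ :=
        norm_coord_eq_of_odd ha hb hG (by linarith) (by linarith) hξ hA hB hodd
    _ ≤ ‖ξ (insert l A, insert l B)‖ :=
        mul_le_of_le_one_left (norm_nonneg _) (abs_le.mpr ⟨by linarith, by linarith⟩)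

end Intertwining

theorem stmt14_general (F : Set ℤ) (lam : ℤ → ℝ) (ε : ℝ) (hε : 0 < ε)
    (hlam : ∀ l ∈ F, ε ≤ lam l ∧ lam l ≤ 1 - ε)
    (a b : ℤ → CARSpace →L[ℂ] CARSpace) (G : CARSpace →L[ℂ] CARSpace)
    (ha : IsCAR_a lam a) (hb : IsCAR_b lam b) (hG : IsCAR_G G) (ξ : CARSpace)
    (hξ : ∀ l ∈ F, (√(1 - lam l) : ℂ)⁻¹ • a l ξ = -(√(lam l) : ℂ)⁻¹ • G (b l ξ))
    (A B : Finset ℤ) (hAB : ⟪carE (A, B), ξ⟫ ≠ 0) :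
    {l : ℤ | l ∈ F ∧ l ∉ A ∪ B ∧ ⟪carE (insert l A, insert l B), ξ⟫ ≠ 0}.Finite := by
  simp only [inner_carE_left, Finset.mem_union, not_or] at hAB ⊢
  have hδ : 0 < 2 * ε * ‖ξ (A, B)‖ := by positivity
  refine Set.Finite.of_injOn (f := fun l => (insert l A, insert l B)) ?_ ?_
    (finite_setOf_le_norm_of_memℓp (lp.memℓp ξ) ENNReal.ofNat_ne_top hδ)
  · rintro l ⟨hl, ⟨hlA, hlB⟩, hne⟩
    rcases Nat.even_or_odd (A.card + B.card) with heven | hodd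
    · obtain ⟨hlo, hhi⟩ := hlam l hl
      exact absurd (coord_insert_insert_eq_zero_of_even ha hb hG (by linarith) (by linarith)
        (hξ l hl) hlA hlB heven) hne
    · exact two_mul_norm_coord_le_of_odd ha hb hG hε (hlam l hl) (hξ l hl) hlA hlB hodd
  · rintro l ⟨-, ⟨hl, -⟩, -⟩ m - h
    exact (Finset.insert_inj hl).mp (Prod.mk.inj h).1

/-- with past `P = {n < 0}` and future `F = {n ≥ 0}`, assume
`ε ≤ λ_l ≤ 1−ε`, `λ_l ≠ 1/2` for all `l`, with `0 < ε < 1/2`, and let `ξ` satisfy the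
`l`-th intertwining equations for every `l ∈ F`. Then for every pair `(A,B)` with
`⟨e_{(A,B)}, ξ⟩ ≠ 0`, the set of `l ∈ F` with `l ∉ A ∪ B` and
`⟨e_{(A∪{l},B∪{l})}, ξ⟩ ≠ 0` is finite. -/
theorem stmt14 (lam : ℤ → ℝ) (ε : ℝ) (hε : 0 < ε ∧ ε < 1 / 2)
    (hlam : ∀ l : ℤ, ε ≤ lam l ∧ lam l ≤ 1 - ε ∧ lam l ≠ 1 / 2)
    (a b : ℤ → CARSpace →L[ℂ] CARSpace) (G : CARSpace →L[ℂ] CARSpace)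
    (ha : IsCAR_a lam a) (hb : IsCAR_b lam b) (hG : IsCAR_G G)
    (ξ : CARSpace) (hξ : ∀ l : ℤ, 0 ≤ l → IntertwinesAt lam a b G l ξ) :
    ∀ A B : Finset ℤ, ⟪carE (A, B), ξ⟫ ≠ 0 →
      {l : ℤ | 0 ≤ l ∧ l ∉ A ∪ B ∧ ⟪carE (insert l A, insert l B), ξ⟫ ≠ 0}.Finite := by
  intro A B hAB
  exact stmt14_general {l | 0 ≤ l} lam ε hε.1 (fun l _ => ⟨(hlam l).1, (hlam l).2.1⟩) a b G
    ha hb hG ξ (fun l hl => (hξ l hl).1) A B hAB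

end
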